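/- arXiv:1910.09423 — 3 statements merged into one kernel-verified Lean document; each statement's English description precedes it below -/
import Mathlib

section
/- Let 𝒞 be a finitely complete category, let 𝔘 be an ultrafilter on 𝒞, let C be an object of 𝒞, and let S and T be sieves on C such that S ∪ T ∈ 𝔘(C). Then either S ∈ 𝔘(C) or T ∈ 𝔘(C). -/
open CategoryTheory Limits

universe w v u

/-- A filter on a category: assigns to each object a collection of sieves that is
upward closed, closed under finite intersections, and omits the empty sieve. -/
structure CatFilter (𝒞 : Type u) [Category.{v} 𝒞] where
  F : ∀ X : 𝒞, Set (Sieve X)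
  /-- (F1) upward closure -/
  mono : ∀ {X : 𝒞} {S R : Sieve X}, S ∈ F X → S ≤ R → R ∈ F X
  /-- (F2) every finite intersection of members is a member -/
  finInter : ∀ {X : 𝒞} (T : Finset (Sieve X)), (∀ S ∈ T, S ∈ F X) → T.inf id ∈ F X
  /-- (F3) the empty sieve is not a member -/
  bot_not_mem : ∀ X : 𝒞, ⊥ ∉ F X

/-- An ultrafilter: a filter with no strictly finer filter. -/
def CatFilter.IsUltra {𝒞 : Type u} [Category.{v} 𝒞] (𝔘 : CatFilter 𝒞) : Prop :=
  ∀ 𝔊 : CatFilter 𝒞, (∀ X : 𝒞, 𝔘.F X ⊆ 𝔊.F X) → ∀ X : 𝒞, 𝔊.F X ⊆ 𝔘.F X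

namespace CatFilter

variable {𝒞 : Type u} [Category.{v} 𝒞]

theorem inf_mem (𝔉 : CatFilter 𝒞) {X : 𝒞} {S T : Sieve X} (hS : S ∈ 𝔉.F X)
    (hT : T ∈ 𝔉.F X) : S ⊓ T ∈ 𝔉.F X := by
  classical
  simpa using 𝔉.finInter {S, T} (by simp [hS, hT])

theorem top_mem (𝔉 : CatFilter 𝒞) (X : 𝒞) : ⊤ ∈ 𝔉.F X := by
  simpa using 𝔉.finInter (X := X) ∅ (by simp)

/-- The filter obtained by adjoining to `𝔉` one sieve on each object, provided that each of
these sieves meets every member of `𝔉`. -/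
def adjoin (𝔉 : CatFilter 𝒞) (A : ∀ X : 𝒞, Sieve X)
    (hA : ∀ X, ∀ U ∈ 𝔉.F X, U ⊓ A X ≠ ⊥) : CatFilter 𝒞 where
  F X := {R | ∃ U ∈ 𝔉.F X, U ⊓ A X ≤ R}
  mono := fun ⟨U, hU, hUS⟩ hSR => ⟨U, hU, hUS.trans hSR⟩
  finInter {X} T hT := by
    classical
    induction T using Finset.induction_on with
    | empty => exact ⟨⊤, 𝔉.top_mem X, by simp⟩
    | insert S T _ ih =>
      obtain ⟨U, hU, hUS⟩ := hT S (Finset.mem_insert_self S T)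
      obtain ⟨V, hV, hVT⟩ := ih fun R hR => hT R (Finset.mem_insert_of_mem hR)
      refine ⟨U ⊓ V, 𝔉.inf_mem hU hV, ?_⟩
      rw [Finset.inf_insert]
      exact le_inf ((inf_le_inf_right _ inf_le_left).trans hUS)
        ((inf_le_inf_right _ inf_le_right).trans hVT)
  bot_not_mem X := fun ⟨U, hU, hUA⟩ => hA X U hU (le_bot_iff.mp hUA)

/-- A sieve that meets every member of an ultrafilter belongs to it. -/
theorem IsUltra.mem_of_forall_inf_ne_bot {𝔘 : CatFilter 𝒞} (h𝔘 : 𝔘.IsUltra) {C : 𝒞}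
    {S : Sieve C} (hS : ∀ U ∈ 𝔘.F C, U ⊓ S ≠ ⊥) : S ∈ 𝔘.F C := by
  classical
  let A : ∀ X : 𝒞, Sieve X := Function.update (fun _ => ⊤) C S
  have hA : ∀ X, ∀ U ∈ 𝔘.F X, U ⊓ A X ≠ ⊥ := by
    intro X U hU
    obtain rfl | hX := eq_or_ne X C
    · simpa [A] using hS U hU
    · simp only [A, Function.update_of_ne hX, inf_top_eq]
      rintro rfl
      exact 𝔘.bot_not_mem X hU
  exact h𝔘 (𝔘.adjoin A hA) (fun X U hU => ⟨U, hU, inf_le_left⟩) C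
    ⟨⊤, 𝔘.top_mem C, by simp [A]⟩

end CatFilter

/-- If the union of two sieves belongs to an ultrafilter, so does one of them. -/
theorem ultrafilter_mem_of_union_mem
    {𝒞 : Type u} [Category.{v} 𝒞] [Limits.HasFiniteLimits 𝒞]
    (𝔘 : CatFilter 𝒞) (h𝔘 : 𝔘.IsUltra) (C : 𝒞) (S T : Sieve C)
    (h : S ⊔ T ∈ 𝔘.F C) : S ∈ 𝔘.F C ∨ T ∈ 𝔘.F C := by
  by_contra! hST
  obtain ⟨U, hU, hUS⟩ : ∃ U ∈ 𝔘.F C, U ⊓ S = ⊥ := by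
    by_contra! hS
    exact hST.1 (h𝔘.mem_of_forall_inf_ne_bot hS)
  obtain ⟨V, hV, hVT⟩ : ∃ V ∈ 𝔘.F C, V ⊓ T = ⊥ := by
    by_contra! hT
    exact hST.2 (h𝔘.mem_of_forall_inf_ne_bot hT)
  refine 𝔘.bot_not_mem C (𝔘.mono (𝔘.inf_mem (𝔘.inf_mem hU hV) h) ?_)
  rintro Y f ⟨⟨hfU, hfV⟩, hfS | hfT⟩
  · exact hUS.le f ⟨hfU, hfS⟩
  · exact hVT.le f ⟨hfV, hfT⟩
end

section
/- Let (𝒞, J) be a finitely complete category endowed with a Grothendieck topology, let C be an object of 𝒞, and let p : 1 → C be a point of C. Assume that for any two 𝔊-neighborhoods V and W of p there exists a 𝔊-neighborhood U of p with U ⊆ V ∩ W. Then the collection 𝒩_p(C) of all cover-neighborhoods of p satisfies: (F1) if S ∈ 𝒩_p(C) and R is a sieve on C with S ⊆ R, then R ∈ 𝒩_p(C); (F2) every finite intersection of sieves of 𝒩_p(C) belongs to 𝒩_p(C); (F3) the empty sieve is not in 𝒩_p(C); that is, (C, 𝒩_p(C)) is a filtered object. -/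
open CategoryTheory Limits

universe w v u

/-- A 𝔊-neighborhood of a point `p : 1 ⟶ X` with respect to a Grothendieck topology `J`:
a covering sieve containing a morphism through which `p` factors. -/
def IsGNbhd {𝒞 : Type u} [Category.{v} 𝒞] [Limits.HasFiniteLimits 𝒞]
    (J : GrothendieckTopology 𝒞) {X : 𝒞} (p : ⊤_ 𝒞 ⟶ X) (V : Sieve X) : Prop :=
  V ∈ J X ∧ ∃ (D : 𝒞) (φ : D ⟶ X), V.arrows φ ∧ ∃ q : ⊤_ 𝒞 ⟶ D, q ≫ φ = p

/-- A cover-neighborhood of a point `p`: a sieve containing some 𝔊-neighborhood of `p`. -/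
def IsCoverNbhd {𝒞 : Type u} [Category.{v} 𝒞] [Limits.HasFiniteLimits 𝒞]
    (J : GrothendieckTopology 𝒞) {X : 𝒞} (p : ⊤_ 𝒞 ⟶ X) (S : Sieve X) : Prop :=
  ∃ V : Sieve X, IsGNbhd J p V ∧ V ≤ S

/-- Two sieves on the same object meet if some morphism belongs to both. -/
def Meets {𝒞 : Type u} [Category.{v} 𝒞] {X : 𝒞} (S T : Sieve X) : Prop :=
  ∃ (D : 𝒞) (f : D ⟶ X), S.arrows f ∧ T.arrows f

section

variable {𝒞 : Type u} [Category.{v} 𝒞] [Limits.HasFiniteLimits 𝒞]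
  {J : GrothendieckTopology 𝒞} {X : 𝒞} {p : ⊤_ 𝒞 ⟶ X}

theorem isGNbhd_top : IsGNbhd J p ⊤ :=
  ⟨J.top_mem X, X, 𝟙 X, trivial, p, Category.comp_id p⟩

theorem IsCoverNbhd.mono {S R : Sieve X} (hS : IsCoverNbhd J p S) (hSR : S ≤ R) :
    IsCoverNbhd J p R :=
  let ⟨V, hV, hVS⟩ := hS
  ⟨V, hV, hVS.trans hSR⟩

theorem isCoverNbhd_top : IsCoverNbhd J p ⊤ :=
  ⟨⊤, isGNbhd_top, le_rfl⟩

theorem not_isCoverNbhd_bot : ¬ IsCoverNbhd J p ⊥ :=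
  fun ⟨_, ⟨_, _, φ, hφ, _⟩, hV⟩ => hV φ hφ

theorem IsCoverNbhd.inf
    (hdir : ∀ V W : Sieve X, IsGNbhd J p V → IsGNbhd J p W →
      ∃ U : Sieve X, IsGNbhd J p U ∧ U ≤ V ⊓ W)
    {S R : Sieve X} (hS : IsCoverNbhd J p S) (hR : IsCoverNbhd J p R) :
    IsCoverNbhd J p (S ⊓ R) := by
  obtain ⟨V, hV, hVS⟩ := hS
  obtain ⟨W, hW, hWR⟩ := hR
  obtain ⟨U, hU, hUVW⟩ := hdir V W hV hW
  exact ⟨U, hU, hUVW.trans (inf_le_inf hVS hWR)⟩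

end

/-- The collection of all cover-neighborhoods of a point satisfies the filter axioms,
provided the 𝔊-neighborhoods of the point are downward directed. -/
theorem coverNbhds_filter_axioms
    {𝒞 : Type u} [Category.{v} 𝒞] [Limits.HasFiniteLimits 𝒞]
    (J : GrothendieckTopology 𝒞) (C : 𝒞) (p : ⊤_ 𝒞 ⟶ C)
    (hdir : ∀ V W : Sieve C, IsGNbhd J p V → IsGNbhd J p W →
      ∃ U : Sieve C, IsGNbhd J p U ∧ U ≤ V ⊓ W) :
    (∀ S ∈ {S : Sieve C | IsCoverNbhd J p S}, ∀ R : Sieve C, S ≤ R →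
        R ∈ {S : Sieve C | IsCoverNbhd J p S}) ∧
    (∀ T : Finset (Sieve C), (∀ S ∈ T, S ∈ {S : Sieve C | IsCoverNbhd J p S}) →
        T.inf id ∈ {S : Sieve C | IsCoverNbhd J p S}) ∧
    (⊥ ∉ {S : Sieve C | IsCoverNbhd J p S}) := by
  exact ⟨fun _ hS _ hSR => hS.mono hSR,
    fun T hT => Finset.inf_induction isCoverNbhd_top
      (fun _ hS _ hR => IsCoverNbhd.inf hdir hS hR) hT,
    not_isCoverNbhd_bot⟩
end

section
/- Let (𝒞, J) be a finitely complete category endowed with a Grothendieck topology, let C be an object of 𝒞, let A be a sieve on C, and let p : 1 → C be a point of C. Assume that for any two 𝔊-neighborhoods V and W of p there exists a 𝔊-neighborhood U of p with U ⊆ V ∩ W. Then p lies in the closure of A if and only if there exists a filter 𝔊 on 𝒞 such that A ∈ 𝔊(C) and 𝔊(C) converges to p. -/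
open CategoryTheory Limits

universe w v u

theorem isGNbhd_top_s12 {𝒞 : Type u} [Category.{v} 𝒞] [Limits.HasFiniteLimits 𝒞]
    (J : GrothendieckTopology 𝒞) {X : 𝒞} (p : ⊤_ 𝒞 ⟶ X) : IsGNbhd J p ⊤ :=
  ⟨J.top_mem X, _, p, trivial, 𝟙 _, Category.id_comp p⟩

/-- The sieve on `X` equal to `S` when `X` is `C`, and maximal otherwise. -/
def extendSieve {𝒞 : Type u} [Category.{v} 𝒞] {C : 𝒞} (S : Sieve C) (X : 𝒞) : Sieve X where
  arrows _ f := ∀ h : X = C, S.arrows (f ≫ eqToHom h)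
  downward_closed hf g h := by
    rw [Category.assoc]
    exact S.downward_closed (hf h) g

theorem extendSieve_self {𝒞 : Type u} [Category.{v} 𝒞] {C : 𝒞} (S : Sieve C) :
    extendSieve S C = S := by
  ext D f
  simp [extendSieve]

theorem extendSieve_mono {𝒞 : Type u} [Category.{v} 𝒞] {C : 𝒞} {S T : Sieve C} (hST : S ≤ T)
    (X : 𝒞) : extendSieve S X ≤ extendSieve T X :=
  fun _ _ hf h => hST _ (hf h)

theorem extendSieve_ne_bot {𝒞 : Type u} [Category.{v} 𝒞] {C : 𝒞} {S : Sieve C}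
    (hS : ∃ (D : 𝒞) (f : D ⟶ C), S.arrows f) (X : 𝒞) : ¬ extendSieve S X ≤ ⊥ := by
  intro hle
  by_cases hX : X = C
  · subst hX
    obtain ⟨D, f, hf⟩ := hS
    rw [extendSieve_self] at hle
    exact hle _ hf
  · exact hle (𝟙 X) fun h => absurd h hX

/-- The filter generated at `C` by a downward directed family of nonempty sieves, and consisting
of the maximal sieve alone at every other object. -/
def CatFilter.generate {𝒞 : Type u} [Category.{v} 𝒞] {C : 𝒞} (B : Set (Sieve C))
    (hne : B.Nonempty) (hdir : ∀ V ∈ B, ∀ W ∈ B, ∃ U ∈ B, U ≤ V ⊓ W)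
    (harrow : ∀ V ∈ B, ∃ (D : 𝒞) (f : D ⟶ C), V.arrows f) : CatFilter 𝒞 where
  F X := {S | ∃ V ∈ B, extendSieve V X ≤ S}
  mono := fun ⟨V, hV, hVS⟩ hSR => ⟨V, hV, hVS.trans hSR⟩
  finInter {X} T hT := by
    refine Finset.inf_induction (p := fun S => ∃ V ∈ B, extendSieve V X ≤ S) ?_ ?_ hT
    · obtain ⟨V, hV⟩ := hne
      exact ⟨V, hV, le_top⟩
    · rintro S ⟨V, hV, hVS⟩ R ⟨W, hW, hWR⟩
      obtain ⟨U, hU, hUVW⟩ := hdir V hV W hW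
      exact ⟨U, hU, le_inf ((extendSieve_mono (hUVW.trans inf_le_left) X).trans hVS)
        ((extendSieve_mono (hUVW.trans inf_le_right) X).trans hWR)⟩
  bot_not_mem X := fun ⟨V, hV, hVbot⟩ => extendSieve_ne_bot (harrow V hV) X hVbot

theorem CatFilter.mem_generate_self {𝒞 : Type u} [Category.{v} 𝒞] {C : 𝒞} {B : Set (Sieve C)}
    {hne : B.Nonempty} {hdir : ∀ V ∈ B, ∀ W ∈ B, ∃ U ∈ B, U ≤ V ⊓ W}
    {harrow : ∀ V ∈ B, ∃ (D : 𝒞) (f : D ⟶ C), V.arrows f} {S : Sieve C} :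
    S ∈ (CatFilter.generate B hne hdir harrow).F C ↔ ∃ V ∈ B, V ≤ S := by
  simp [CatFilter.generate, extendSieve_self]

theorem CatFilter.inf_mem_s12 {𝒞 : Type u} [Category.{v} 𝒞] (𝔊 : CatFilter 𝒞) {X : 𝒞}
    {S R : Sieve X} (hS : S ∈ 𝔊.F X) (hR : R ∈ 𝔊.F X) : S ⊓ R ∈ 𝔊.F X := by
  classical
  simpa using 𝔊.finInter {S, R} (by simp [hS, hR])

theorem CatFilter.meets_of_mem {𝒞 : Type u} [Category.{v} 𝒞] (𝔊 : CatFilter 𝒞) {X : 𝒞}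
    {S R : Sieve X} (hS : S ∈ 𝔊.F X) (hR : R ∈ 𝔊.F X) : Meets S R := by
  by_contra hSR
  exact 𝔊.bot_not_mem X (𝔊.mono (𝔊.inf_mem_s12 hS hR) fun D f hf => hSR ⟨D, f, hf⟩)

/-- A point lies in the closure of a sieve A iff there is a filter containing A (at C)
that converges to the point, assuming 𝔊-neighborhoods of the point are downward directed. -/
theorem mem_closure_iff_exists_convergent_filter
    {𝒞 : Type u} [Category.{v} 𝒞] [Limits.HasFiniteLimits 𝒞]
    (J : GrothendieckTopology 𝒞) (C : 𝒞) (A : Sieve C) (p : ⊤_ 𝒞 ⟶ C)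
    (hdir : ∀ V W : Sieve C, IsGNbhd J p V → IsGNbhd J p W →
      ∃ U : Sieve C, IsGNbhd J p U ∧ U ≤ V ⊓ W) :
    (∀ S : Sieve C, IsCoverNbhd J p S → Meets S A) ↔
    ∃ 𝔊 : CatFilter 𝒞, A ∈ 𝔊.F C ∧ (∀ S : Sieve C, IsCoverNbhd J p S → S ∈ 𝔊.F C) := by
  constructor
  · intro hA
    refine ⟨CatFilter.generate {S | ∃ V, IsGNbhd J p V ∧ V ⊓ A = S}
      ⟨_, ⊤, isGNbhd_top_s12 J p, rfl⟩ ?_ ?_, ?_, ?_⟩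
    · rintro _ ⟨V, hV, rfl⟩ _ ⟨W, hW, rfl⟩
      obtain ⟨U, hU, hUVW⟩ := hdir V W hV hW
      exact ⟨U ⊓ A, ⟨U, hU, rfl⟩, le_inf (inf_le_inf_right A (hUVW.trans inf_le_left))
        (inf_le_inf_right A (hUVW.trans inf_le_right))⟩
    · rintro _ ⟨V, hV, rfl⟩
      exact hA V ⟨V, hV, le_rfl⟩
    · exact CatFilter.mem_generate_self.2 ⟨_, ⟨⊤, isGNbhd_top_s12 J p, rfl⟩, inf_le_right⟩
    · rintro S ⟨V, hV, hVS⟩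
      exact CatFilter.mem_generate_self.2 ⟨_, ⟨V, hV, rfl⟩, inf_le_left.trans hVS⟩
  · rintro ⟨𝔊, hA, hconv⟩ S hS
    exact 𝔊.meets_of_mem (hconv S hS) hA
end
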